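/- For every real x > 0 there exists a constant C_x > 0, depending only on x, such that for all integers μ ≥ 0 and all real k > 0: ‖E(k,μ,x)‖ ≤ C_x·√(cosh k). (Equivalently, |√(sinh x)·𝖯^{μ}_{ik−1/2}(cosh x)| ≤ C_x·√(cosh k)·‖Γ(1/2+μ+ik)/Γ(1/2−μ+ik)‖.) -/

import Mathlib

open Real

/-- The Gauss hypergeometric series `₂F₁(a,b,c;z)`. -/
noncomputable def hyp2F1 (a b c z : ℂ) : ℂ :=
  ∑' n : ℕ, (ascPochhammer ℂ n).eval a * (ascPochhammer ℂ n).eval b /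
      ((ascPochhammer ℂ n).eval c * (n.factorial : ℂ)) * z ^ n

/-- `E(k,μ,x) = 2^{-μ} (tanh x)^{μ+1/2} (cosh x)^{-ik} (1/μ!)
  ₂F₁((μ+1/2+ik)/2, (μ+3/2+ik)/2, μ+1; tanh² x)`,
the weighted conical associated Legendre function `√(sinh x) 𝖯^{-μ}_{ik-1/2}(cosh x)`. -/
noncomputable def legE (k : ℝ) (μ : ℕ) (x : ℝ) : ℂ :=
  (2 : ℂ) ^ (-(μ : ℂ)) * ((Real.tanh x ^ ((μ : ℝ) + 1 / 2) : ℝ) : ℂ) *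
    ((Real.cosh x : ℂ) ^ (-(Complex.I * k))) * ((μ.factorial : ℂ))⁻¹ *
    hyp2F1 (((μ : ℂ) + 1 / 2 + Complex.I * k) / 2)
      (((μ : ℂ) + 3 / 2 + Complex.I * k) / 2) ((μ : ℂ) + 1)
      ((Real.tanh x ^ 2 : ℝ) : ℂ)

/-!
Put `s = 1/2 + ik`, `τ = tanh x` and expand `(1 - τ cos t)^(-s)` in its binomial series. Its `μ`-th
Fourier coefficient picks out the moments of `cos^m t` against `e^{-iμt}`, which vanish unless
`m = μ + 2n`. Resumming with the duplication formula for Pochhammer symbols gives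

  `(2π)⁻¹ ∫₀^{2π} (1 - τ cos t)^(-s) e^{-iμt} dt`
  `  = (s)_μ / μ! · (τ/2)^μ · ₂F₁((s+μ)/2, (s+μ+1)/2, μ+1; τ²)`.

The left side is at most `(1 - τ)^(-1/2)` in absolute value, because for a positive base the modulus
of the power only sees `Re s = 1/2`. On the right, `|(s)_μ| ≥ (1/2)_μ ≥ 1/2`.
-/

section Pochhammer

lemma ascPochhammer_eval_add {R : Type*} [CommSemiring R] (s : R) (m n : ℕ) :
    (ascPochhammer R (m + n)).eval s =
      (ascPochhammer R m).eval s * (ascPochhammer R n).eval (s + m) := by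
  simp [← ascPochhammer_mul, Polynomial.eval_comp]

lemma ascPochhammer_eval_two_mul {K : Type*} [Field K] [NeZero (2 : K)] (a : K) (n : ℕ) :
    (ascPochhammer K (2 * n)).eval a =
      4 ^ n * ((ascPochhammer K n).eval (a / 2) * (ascPochhammer K n).eval ((a + 1) / 2)) := by
  induction n with
  | zero => simp
  | succ n ih =>
    rw [show 2 * (n + 1) = 2 * n + 1 + 1 by ring]
    simp only [ascPochhammer_succ_eval, ih]
    push_cast
    field_simp
    ring

variable {R : Type*} [CommSemiring R] [PartialOrder R] [IsOrderedRing R] {a : R}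

lemma one_le_ascPochhammer_eval (ha : 1 ≤ a) (n : ℕ) : 1 ≤ (ascPochhammer R n).eval a := by
  induction n with
  | zero => simp
  | succ n ih =>
    rw [ascPochhammer_succ_eval]
    exact one_le_mul_of_one_le_of_one_le ih (ha.trans (le_add_of_nonneg_right n.cast_nonneg))

lemma le_ascPochhammer_eval (ha : 0 ≤ a) (ha' : a ≤ 1) (n : ℕ) :
    a ≤ (ascPochhammer R n).eval a := by
  cases n with
  | zero => simpa using ha'
  | succ n =>
    rw [add_comm, ascPochhammer_eval_add, ascPochhammer_one, Polynomial.eval_X, Nat.cast_one]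
    exact le_mul_of_one_le_right ha
      (one_le_ascPochhammer_eval (le_add_of_nonneg_left ha) n)

lemma ascPochhammer_eval_re_le_norm {s : ℂ} (hs : 0 ≤ s.re) (n : ℕ) :
    (ascPochhammer ℝ n).eval s.re ≤ ‖(ascPochhammer ℂ n).eval s‖ := by
  induction n with
  | zero => simp
  | succ n ih =>
    have factor_le : s.re + n ≤ ‖s + n‖ := by simpa using Complex.re_le_norm (s + n)
    rw [ascPochhammer_succ_eval, ascPochhammer_succ_eval, norm_mul]
    gcongr

lemma re_le_norm_ascPochhammer_eval {s : ℂ} (hs : 0 ≤ s.re) (hs' : s.re ≤ 1) (n : ℕ) :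
    s.re ≤ ‖(ascPochhammer ℂ n).eval s‖ :=
  (le_ascPochhammer_eval hs hs' n).trans (ascPochhammer_eval_re_le_norm hs n)

end Pochhammer

section BinomialSeries

lemma hasSum_ascPochhammer_one_sub_cpow_neg (s : ℂ) {z : ℂ} (hz : ‖z‖ < 1) :
    HasSum (fun m : ℕ => (ascPochhammer ℂ m).eval s / m.factorial * z ^ m) ((1 - z) ^ (-s)) := by
  have coeff (m : ℕ) : (ascPochhammer ℂ m).eval s / m.factorial = Ring.choose (s + m - 1) m := by
    have h := Ring.factorial_nsmul_multichoose_eq_ascPochhammer s m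
    rw [Polynomial.ascPochhammer_smeval_cast, Polynomial.ascPochhammer_smeval_eq_eval,
      Ring.multichoose_eq, nsmul_eq_mul] at h
    rw [← h, mul_div_cancel_left₀ _ (Nat.cast_ne_zero.2 m.factorial_ne_zero)]
  have series := (Complex.one_div_one_sub_cpow_hasFPowerSeriesOnBall_zero s).hasSum (y := z)
    (by simpa [← ENNReal.ofReal_one, Metric.eball_ofReal] using hz)
  simpa [coeff, Complex.cpow_neg, mul_comm] using series

lemma hasSum_integral_pow_mul {a : ℕ → ℂ} {u g : ℝ → ℂ} {r : ℝ} (hu : Continuous u)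
    (hg : Continuous g) (hur : ∀ t, ‖u t‖ ≤ r) (ha : Summable fun m => ‖a m‖ * r ^ m)
    (α β : ℝ) :
    HasSum (fun m => a m * ∫ t in α..β, u t ^ m * g t)
      (∫ t in α..β, (∑' m, a m * u t ^ m) * g t) := by
  have term_le (m : ℕ) (t : ℝ) : ‖a m * u t ^ m‖ ≤ ‖a m‖ * r ^ m := by
    rw [norm_mul, norm_pow]
    gcongr
    exact hur t
  simp_rw [← intervalIntegral.integral_const_mul, ← mul_assoc]
  refine intervalIntegral.hasSum_integral_of_dominated_convergence
    (fun m t => ‖a m‖ * r ^ m * ‖g t‖) (fun m => ?_) (fun m => ?_) ?_ ?_ ?_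
  · exact Continuous.aestronglyMeasurable (by fun_prop)
  · refine .of_forall fun t _ => ?_
    rw [norm_mul]
    gcongr
    exact term_le m t
  · exact .of_forall fun t _ => ha.mul_right _
  · simp_rw [tsum_mul_right]
    exact Continuous.intervalIntegrable (by fun_prop) _ _
  · exact .of_forall fun t _ => ((ha.of_norm_bounded (term_le · t)).hasSum).mul_right _

end BinomialSeries

section CosineMoments

lemma integral_exp_int_mul_I (l : ℤ) :
    ∫ t in (0 : ℝ)..2 * π, Complex.exp (l * Complex.I * t) = if l = 0 then 2 * (π : ℂ) else 0 := by
  split_ifs with hl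
  · simp [hl]
  · have periodic : Complex.exp (l * Complex.I * (2 * π : ℝ)) = 1 :=
      Complex.exp_eq_one_iff.2 ⟨l, by push_cast; ring⟩
    rw [integral_exp_mul_complex (by simp [hl]), periodic]
    simp

lemma cos_pow_mul_exp_eq_sum (m : ℕ) (l : ℤ) (t : ℝ) :
    Complex.cos t ^ m * Complex.exp (-(l * Complex.I * t)) =
      ∑ j ∈ Finset.range (m + 1),
        m.choose j / 2 ^ m * Complex.exp ((2 * j - m - l : ℤ) * Complex.I * t) := by
  rw [Complex.cos, div_pow, add_pow, Finset.sum_div, Finset.sum_mul]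
  refine Finset.sum_congr rfl fun j hj => ?_
  have exp_split : Complex.exp ((2 * j - m - l : ℤ) * Complex.I * t) =
      Complex.exp (t * Complex.I) ^ j * Complex.exp (-t * Complex.I) ^ (m - j) *
        Complex.exp (-(l * Complex.I * t)) := by
    rw [← Complex.exp_nat_mul, ← Complex.exp_nat_mul, ← Complex.exp_add, ← Complex.exp_add]
    congr 1
    push_cast [Nat.cast_sub (Finset.mem_range_succ_iff.1 hj)]
    ring
  rw [exp_split]
  ring

lemma integral_cos_pow_mul_exp_eq_sum (m : ℕ) (l : ℤ) :
    ∫ t in (0 : ℝ)..2 * π, Complex.cos t ^ m * Complex.exp (-(l * Complex.I * t)) =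
      ∑ j ∈ Finset.range (m + 1),
        m.choose j / 2 ^ m * if (2 * j - m - l : ℤ) = 0 then 2 * (π : ℂ) else 0 := by
  simp_rw [cos_pow_mul_exp_eq_sum]
  rw [intervalIntegral.integral_finsetSum
    fun j _ => Continuous.intervalIntegrable (by fun_prop) _ _]
  simp_rw [intervalIntegral.integral_const_mul, integral_exp_int_mul_I]

lemma integral_cos_pow_mul_exp_eq_zero {m μ : ℕ} (h : ∀ n, μ + 2 * n ≠ m) :
    ∫ t in (0 : ℝ)..2 * π, Complex.cos t ^ m * Complex.exp (-(μ * Complex.I * t)) = 0 := by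
  have moment := integral_cos_pow_mul_exp_eq_sum m μ
  rw [Int.cast_natCast] at moment
  rw [moment]
  refine Finset.sum_eq_zero fun j hj => ?_
  have hjm := Finset.mem_range_succ_iff.1 hj
  rw [if_neg fun h0 => h (m - j) (by omega), mul_zero]

lemma integral_cos_pow_add_two_mul_mul_exp (μ n : ℕ) :
    ∫ t in (0 : ℝ)..2 * π, Complex.cos t ^ (μ + 2 * n) * Complex.exp (-(μ * Complex.I * t)) =
      (μ + 2 * n).choose (μ + n) / 2 ^ (μ + 2 * n) * (2 * π) := by
  have moment := integral_cos_pow_mul_exp_eq_sum (μ + 2 * n) μ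
  rw [Int.cast_natCast] at moment
  rw [moment, Finset.sum_eq_single_of_mem (μ + n) (Finset.mem_range_succ_iff.2 (by omega)),
    if_pos (by push_cast; ring)]
  intro j _ hj
  rw [if_neg fun h0 => hj (by omega), mul_zero]

end CosineMoments

section IntegralRepresentation

/-- The function `(z/2)^μ / μ! · ₂F₁((s+μ)/2, (s+μ+1)/2, μ+1; z²)`. Multiplied by the Pochhammer
symbol `(s)_μ` it is the `μ`-th Fourier coefficient of `t ↦ (1 - z cos t)^(-s)`; at `s = 1/2 + ik`,
`z = tanh x` it is `E(k,μ,x)` up to elementary factors not depending on `μ`. -/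
noncomputable def legSeries (s : ℂ) (μ : ℕ) (z : ℂ) : ℂ :=
  (z / 2) ^ μ / μ.factorial * hyp2F1 ((s + μ) / 2) ((s + μ + 1) / 2) (μ + 1) (z ^ 2)

lemma binomial_coeff_mul_cos_moment (s z : ℂ) (μ n : ℕ) :
    (ascPochhammer ℂ (μ + 2 * n)).eval s / (μ + 2 * n).factorial * z ^ (μ + 2 * n) *
        ((μ + 2 * n).choose (μ + n) / 2 ^ (μ + 2 * n) * (2 * π)) =
      2 * π * (ascPochhammer ℂ μ).eval s * ((z / 2) ^ μ / μ.factorial) *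
        ((ascPochhammer ℂ n).eval ((s + μ) / 2) * (ascPochhammer ℂ n).eval ((s + μ + 1) / 2) /
          ((ascPochhammer ℂ n).eval (μ + 1 : ℂ) * n.factorial) * (z ^ 2) ^ n) := by
  have factorial_ne_zero (j : ℕ) : (j.factorial : ℂ) ≠ 0 :=
    Nat.cast_ne_zero.2 j.factorial_ne_zero
  have denominator :
      (ascPochhammer ℂ n).eval (μ + 1 : ℂ) = (μ + n).factorial / μ.factorial := by
    rw [eq_div_iff (factorial_ne_zero μ), mul_comm]
    exact_mod_cast factorial_mul_ascPochhammer ℂ μ n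
  have choose_eq : ((μ + 2 * n).choose (μ + n) : ℂ) =
      (μ + 2 * n).factorial / ((μ + n).factorial * n.factorial) := by
    rw [Nat.cast_choose ℂ (by omega), show μ + 2 * n - (μ + n) = n by omega]
  have two_pow : (2 : ℂ) ^ (μ + 2 * n) = 2 ^ μ * 4 ^ n := by
    rw [pow_add, pow_mul]
    norm_num
  rw [denominator, choose_eq, ascPochhammer_eval_add, ascPochhammer_eval_two_mul, two_pow, div_pow,
    pow_add z, pow_mul z]
  field_simp [factorial_ne_zero]

lemma hasSum_integral_one_sub_mul_cos_cpow_neg (s : ℂ) {z : ℂ} (hz : ‖z‖ < 1) (μ : ℕ) :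
    HasSum
      (fun m : ℕ => (ascPochhammer ℂ m).eval s / m.factorial * z ^ m *
        ∫ t in (0 : ℝ)..2 * π, Complex.cos t ^ m * Complex.exp (-(μ * Complex.I * t)))
      (∫ t in (0 : ℝ)..2 * π,
        (1 - z * Complex.cos t) ^ (-s) * Complex.exp (-(μ * Complex.I * t))) := by
  have norm_cos_le (t : ℝ) : ‖Complex.cos t‖ ≤ 1 := by
    simpa [← Complex.ofReal_cos] using Real.abs_cos_le_one t
  have binomial (t : ℝ) :
      ∑' m : ℕ, (ascPochhammer ℂ m).eval s / m.factorial * z ^ m * Complex.cos t ^ m =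
        (1 - z * Complex.cos t) ^ (-s) := by
    have norm_lt : ‖z * Complex.cos t‖ < 1 := by
      rw [norm_mul]
      exact (mul_le_of_le_one_right (norm_nonneg z) (norm_cos_le t)).trans_lt hz
    simpa only [mul_pow, mul_assoc] using (hasSum_ascPochhammer_one_sub_cpow_neg s norm_lt).tsum_eq
  simp_rw [← binomial]
  refine hasSum_integral_pow_mul (by fun_prop) (by fun_prop) norm_cos_le ?_ _ _
  simpa using (hasSum_ascPochhammer_one_sub_cpow_neg s hz).summable.norm

theorem integral_one_sub_mul_cos_cpow_neg_mul_exp (s : ℂ) {z : ℂ} (hz : ‖z‖ < 1) (μ : ℕ) :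
    ∫ t in (0 : ℝ)..2 * π,
        (1 - z * Complex.cos t) ^ (-s) * Complex.exp (-(μ * Complex.I * t)) =
      2 * π * (ascPochhammer ℂ μ).eval s * legSeries s μ z := by
  have expansion := hasSum_integral_one_sub_mul_cos_cpow_neg s hz μ
  have index_injective : Function.Injective fun n : ℕ => μ + 2 * n := fun _ _ h => by
    simpa using h
  rw [← index_injective.hasSum_iff fun m hm => by
    rw [integral_cos_pow_mul_exp_eq_zero fun n hn => hm ⟨n, hn⟩, mul_zero]] at expansion
  rw [← expansion.tsum_eq, legSeries, hyp2F1, ← mul_assoc, ← tsum_mul_left]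
  refine tsum_congr fun n => ?_
  rw [Function.comp_apply, integral_cos_pow_add_two_mul_mul_exp, binomial_coeff_mul_cos_moment]

end IntegralRepresentation

section Bounds

variable {s : ℂ} {τ : ℝ}

lemma norm_one_sub_mul_cos_cpow_neg_le (hs : 0 ≤ s.re) (hτ : |τ| < 1) (t : ℝ) :
    ‖(1 - τ * Complex.cos t) ^ (-s)‖ ≤ (1 - |τ|) ^ (-s.re) := by
  have base_pos : 0 < 1 - |τ| := sub_pos.2 hτ
  have base_le : 1 - |τ| ≤ 1 - τ * Real.cos t := by
    have : |τ * Real.cos t| ≤ |τ| := by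
      rw [abs_mul]
      exact mul_le_of_le_one_right (abs_nonneg τ) (Real.abs_cos_le_one t)
    linarith [le_abs_self (τ * Real.cos t)]
  have cast_base : (1 - τ * Complex.cos t : ℂ) = (1 - τ * Real.cos t : ℝ) := by push_cast; rfl
  rw [cast_base, Complex.norm_cpow_eq_rpow_re_of_pos (base_pos.trans_le base_le), Complex.neg_re]
  exact Real.rpow_le_rpow_of_nonpos base_pos base_le (neg_nonpos.2 hs)

theorem norm_ascPochhammer_mul_norm_legSeries_le (hs : 0 ≤ s.re) (hτ : |τ| < 1) (μ : ℕ) :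
    ‖(ascPochhammer ℂ μ).eval s‖ * ‖legSeries s μ τ‖ ≤ (1 - |τ|) ^ (-s.re) := by
  have integrand_le (t : ℝ) :
      ‖(1 - τ * Complex.cos t) ^ (-s) * Complex.exp (-(μ * Complex.I * t))‖ ≤
        (1 - |τ|) ^ (-s.re) := by
    have norm_exp : ‖Complex.exp (-(μ * Complex.I * t))‖ = 1 := by simp [Complex.norm_exp]
    rw [norm_mul, norm_exp, mul_one]
    exact norm_one_sub_mul_cos_cpow_neg_le hs hτ t
  have integral_le := intervalIntegral.norm_integral_le_of_norm_le_const (a := 0) (b := 2 * π)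
    fun t _ => integrand_le t
  rw [integral_one_sub_mul_cos_cpow_neg_mul_exp s (by simpa using hτ)] at integral_le
  refine le_of_mul_le_mul_left ?_ Real.two_pi_pos
  simpa [abs_of_pos Real.pi_pos, mul_assoc, mul_comm, mul_left_comm] using integral_le

end Bounds

lemma tanh_pos_of_pos {x : ℝ} (hx : 0 < x) : 0 < Real.tanh x := by
  rw [Real.tanh_eq_sinh_div_cosh]
  exact div_pos (Real.sinh_pos_iff.2 hx) (Real.cosh_pos x)

lemma norm_legE {x : ℝ} (hx : 0 < x) (k : ℝ) (μ : ℕ) :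
    ‖legE k μ x‖ = √(Real.tanh x) * ‖legSeries (1 / 2 + Complex.I * k) μ (Real.tanh x)‖ := by
  have tanh_pos := tanh_pos_of_pos hx
  have norm_cosh_cpow : ‖(Real.cosh x : ℂ) ^ (-(Complex.I * k))‖ = 1 := by
    rw [Complex.norm_cpow_eq_rpow_re_of_pos (Real.cosh_pos x)]
    simp
  have tanh_rpow : Real.tanh x ^ ((μ : ℝ) + 1 / 2) = Real.tanh x ^ μ * √(Real.tanh x) := by
    rw [Real.rpow_add tanh_pos, Real.rpow_natCast, Real.sqrt_eq_rpow]
  have first_param : ((μ : ℂ) + 1 / 2 + Complex.I * k) / 2 =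
      (1 / 2 + Complex.I * k + μ) / 2 := by ring
  have second_param : ((μ : ℂ) + 3 / 2 + Complex.I * k) / 2 =
      (1 / 2 + Complex.I * k + μ + 1) / 2 := by ring
  rw [legE, legSeries, first_param, second_param, tanh_rpow, Complex.cpow_neg,
    Complex.cpow_natCast, Complex.ofReal_pow]
  simp only [norm_mul, norm_cosh_cpow, norm_div, norm_pow, norm_inv, Complex.ofReal_mul,
    Complex.ofReal_pow, Complex.norm_of_nonneg (Real.sqrt_nonneg _), div_pow]
  ring

theorem legE_bound_general {x : ℝ} (hx : 0 < x) (μ : ℕ) (k : ℝ) :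
    ‖legE k μ x‖ ≤ 2 * √(Real.tanh x / (1 - Real.tanh x)) := by
  set s : ℂ := 1 / 2 + Complex.I * k
  have re_s : s.re = 1 / 2 := by simp [s]
  have half_le : 1 / 2 ≤ ‖(ascPochhammer ℂ μ).eval s‖ :=
    re_s ▸ re_le_norm_ascPochhammer_eval (by norm_num [re_s]) (by norm_num [re_s]) μ
  have legSeries_le : 1 / 2 * ‖legSeries s μ (Real.tanh x)‖ ≤ (√(1 - Real.tanh x))⁻¹ :=
    calc 1 / 2 * ‖legSeries s μ (Real.tanh x)‖
        ≤ ‖(ascPochhammer ℂ μ).eval s‖ * ‖legSeries s μ (Real.tanh x)‖ := by gcongr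
      _ ≤ (1 - |Real.tanh x|) ^ (-s.re) :=
          norm_ascPochhammer_mul_norm_legSeries_le (by norm_num [re_s]) (Real.abs_tanh_lt_one x) μ
      _ = (√(1 - Real.tanh x))⁻¹ := by
          rw [abs_of_pos (tanh_pos_of_pos hx), re_s,
            Real.rpow_neg (sub_pos.2 (Real.tanh_lt_one x)).le, Real.sqrt_eq_rpow]
  calc ‖legE k μ x‖ = 2 * (√(Real.tanh x) * (1 / 2 * ‖legSeries s μ (Real.tanh x)‖)) := by
        rw [norm_legE hx]
        ring
    _ ≤ 2 * (√(Real.tanh x) * (√(1 - Real.tanh x))⁻¹) := by gcongr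
    _ = 2 * √(Real.tanh x / (1 - Real.tanh x)) := by
        rw [Real.sqrt_div (tanh_pos_of_pos hx).le, div_eq_mul_inv]

/-- For fixed `x > 0`, `|E(k,μ,x)| ≤ C_x √(cosh k)` uniformly in `μ ≥ 0` and `k > 0`. -/
theorem legE_bound (x : ℝ) (hx : 0 < x) :
    ∃ C > 0, ∀ (μ : ℕ) (k : ℝ), 0 < k →
      ‖legE k μ x‖ ≤ C * Real.sqrt (Real.cosh k) := by
  have tanh_pos := tanh_pos_of_pos hx
  have one_sub_tanh_pos := sub_pos.2 (Real.tanh_lt_one x)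
  exact ⟨2 * √(Real.tanh x / (1 - Real.tanh x)), by positivity, fun μ k _ =>
    (legE_bound_general hx μ k).trans
      (le_mul_of_one_le_right (by positivity) (Real.one_le_sqrt.2 (Real.one_le_cosh k)))⟩
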